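/- Let 2 ≤ m ≤ k, let V = {x ∈ M(m,k;ℝ) : the k columns of x sum to zero}, and let S = {x ∈ V : ‖x‖ = 1} be the pre-shape sphere with its subspace topology. Then the set {x ∈ S : rank x ≥ m − 1} is open and dense in S. -/

import Mathlib

open Matrix

noncomputable section

/-- Frobenius inner product `⟨x,y⟩ = tr(x yᵀ)` on real `m × k` matrices. -/
def fip {m k : ℕ} (x y : Matrix (Fin m) (Fin k) ℝ) : ℝ := Matrix.trace (x * yᵀ)

/-- The columns of `x` sum to the zero vector (centered landmark configuration). -/
def centered {m k : ℕ} (x : Matrix (Fin m) (Fin k) ℝ) : Prop :=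
  ∀ i : Fin m, ∑ j : Fin k, x i j = 0

/-- The pre-shape sphere `S = {x ∈ V : ‖x‖ = 1}` (Frobenius norm) inside the space `V`
of centered configurations, carrying the subspace topology. -/
def preSphere (m k : ℕ) : Type :=
  {x : Matrix (Fin m) (Fin k) ℝ // centered x ∧ Real.sqrt (fip x x) = 1}

instance (m k : ℕ) : TopologicalSpace (preSphere m k) :=
  instTopologicalSpaceSubtype

/-!
A matrix `x` has rank at least `r` exactly when `det (P * x * Q) ≠ 0` for some `P` with `r` rows and
`Q` with `r` columns; this is an open condition in `x`. On a line `x + t • y` with `P * y * Q = 1`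
this determinant is the characteristic polynomial of `-(P * x * Q)` at `t`, so
`rank (x + t • y) < rank y` for only finitely many `t`. Perturbing a centered `x` by a centered `y`
of rank at least `r` and renormalising, which does not change the rank, approximates `x` on the
sphere by matrices of rank at least `r`.
-/

open Filter Topology

section Rank

variable {K m n ι : Type*} [Field K] [Fintype n]

lemma card_le_rank_of_det_mul_mul_ne_zero [Fintype m] [Fintype ι] [DecidableEq ι]
    {P : Matrix ι m K} {x : Matrix m n K} {Q : Matrix n ι K} (h : (P * x * Q).det ≠ 0) :
    Fintype.card ι ≤ x.rank :=
  calc Fintype.card ι = (P * x * Q).rank := (rank_of_det_ne_zero h).symm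
    _ ≤ (P * x).rank := rank_mul_le_left _ _
    _ ≤ x.rank := rank_mul_le_right _ _

lemma exists_mul_mul_eq_one [Fintype m] (x : Matrix m n K) :
    ∃ (P : Matrix (Fin x.rank) m K) (Q : Matrix n (Fin x.rank) K), P * x * Q = 1 := by
  classical
  let e : x.mulVecLin.range ≃ₗ[K] (Fin x.rank → K) := (Module.finBasis K _).equivFun
  obtain ⟨retract, hretract⟩ := x.mulVecLin.range.subtype.exists_leftInverse_of_injective
    (Submodule.ker_subtype _)
  obtain ⟨lift, hlift⟩ := x.mulVecLin.rangeRestrict.exists_rightInverse_of_surjective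
    (LinearMap.range_rangeRestrict _)
  refine ⟨(e.toLinearMap ∘ₗ retract).toMatrix', (lift ∘ₗ e.symm.toLinearMap).toMatrix', ?_⟩
  have hincl : x.mulVecLin ∘ₗ lift = x.mulVecLin.range.subtype :=
    LinearMap.ext fun w ↦ congrArg Subtype.val (LinearMap.congr_fun hlift w)
  apply Matrix.toLin'.injective
  calc toLin' ((e.toLinearMap ∘ₗ retract).toMatrix' * x * (lift ∘ₗ e.symm.toLinearMap).toMatrix')
      = e.toLinearMap ∘ₗ retract ∘ₗ (x.mulVecLin ∘ₗ lift) ∘ₗ e.symm.toLinearMap := by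
        rw [toLin'_mul, toLin'_mul, toLin'_toMatrix', toLin'_toMatrix', toLin'_apply']
        simp only [LinearMap.comp_assoc]
    _ = e.toLinearMap ∘ₗ (retract ∘ₗ x.mulVecLin.range.subtype) ∘ₗ e.symm.toLinearMap := by
        rw [hincl, LinearMap.comp_assoc]
    _ = toLin' 1 := by rw [hretract, LinearMap.id_comp, e.comp_symm, toLin'_one]

lemma isOpen_setOf_le_rank [Finite m] [TopologicalSpace K] [IsTopologicalRing K] [T1Space K]
    (r : ℕ) : IsOpen {x : Matrix m n K | r ≤ x.rank} := by
  have := Fintype.ofFinite m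
  refine isOpen_iff_mem_nhds.2 fun x (hx : r ≤ x.rank) ↦ ?_
  obtain ⟨P, Q, hPQ⟩ := exists_mul_mul_eq_one x
  have hdet : ∀ᶠ z in 𝓝 x, (P * z * Q).det ≠ 0 :=
    ContinuousAt.eventually_ne (by fun_prop) (by simp [hPQ])
  filter_upwards [hdet] with z hz
  exact hx.trans (by simpa using card_le_rank_of_det_mul_mul_ne_zero hz)

lemma finite_setOf_rank_add_smul_lt [Finite m] (x y : Matrix m n K) :
    {t : K | (x + t • y).rank < y.rank}.Finite := by
  have := Fintype.ofFinite m
  obtain ⟨P, Q, hPQ⟩ := exists_mul_mul_eq_one y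
  refine (Polynomial.finite_setOfPred_isRoot (charpoly_monic (-(P * x * Q))).ne_zero).subset
    fun t ht ↦ ?_
  have hdet : (P * (x + t • y) * Q).det = (-(P * x * Q)).charpoly.eval t := by
    rw [eval_charpoly, sub_neg_eq_add, Matrix.mul_add, Matrix.add_mul, Matrix.mul_smul,
      Matrix.smul_mul, hPQ, add_comm, smul_one_eq_diagonal, scalar_apply]
  by_contra hroot
  have hle := card_le_rank_of_det_mul_mul_ne_zero (hdet.trans_ne hroot)
  exact (ht.trans_le (by simpa using hle)).false

lemma mem_closure_setOf_mem_and_rank_le [Finite m] [TopologicalSpace K] [IsTopologicalRing K]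
    [T1Space K] [(𝓝[≠] (0 : K)).NeBot] {V : Submodule K (Matrix m n K)} {x y : Matrix m n K}
    (hx : x ∈ V) (hy : y ∈ V) : x ∈ closure {z ∈ V | y.rank ≤ z.rank} := by
  have hlim : Tendsto (fun t : K ↦ x + t • y) (𝓝[≠] 0) (𝓝 x) := by
    have hcont : Continuous fun t : K ↦ x + t • y := by fun_prop
    simpa using (hcont.tendsto 0).mono_left nhdsWithin_le_nhds
  have hrank : ∀ᶠ t in 𝓝[≠] (0 : K), y.rank ≤ (x + t • y).rank := by
    filter_upwards [nhdsNE_le_cofinite 0 (finite_setOf_rank_add_smul_lt x y).compl_mem_cofinite]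
      with t ht using not_lt.1 ht
  exact mem_closure_of_tendsto hlim
    (hrank.mono fun t ht ↦ ⟨V.add_mem hx (V.smul_mem t hy), ht⟩)

end Rank

lemma mem_closure_inter_unitSphere {E : Type*} [NormedAddCommGroup E] [NormedSpace ℝ E] {s : Set E}
    (hs : ∀ c : ℝ, 0 < c → ∀ x ∈ s, c • x ∈ s) {x : E} (hx : x ∈ closure s) (hnorm : ‖x‖ = 1) :
    x ∈ closure (s ∩ Metric.sphere 0 1) := by
  have hx0 : ‖x‖ ≠ 0 := by simp [hnorm]
  have hlim : Tendsto (fun z : E ↦ ‖z‖⁻¹ • z) (𝓝 x) (𝓝 x) := by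
    have hcont : ContinuousAt (fun z : E ↦ ‖z‖⁻¹ • z) x := by fun_prop (disch := exact hx0)
    simpa [hnorm] using hcont.tendsto
  have hne : ∀ᶠ z in 𝓝 x, z ≠ 0 := eventually_ne_nhds (norm_ne_zero_iff.1 hx0)
  refine mem_closure_of_frequently_of_tendsto ?_ hlim
  refine ((mem_closure_iff_frequently.1 hx).and_eventually hne).mono fun z ⟨hzs, hz0⟩ ↦ ⟨?_, ?_⟩
  · exact hs _ (inv_pos.2 (norm_pos_iff.2 hz0)) z hzs
  · simpa using norm_smul_inv_norm (𝕜 := ℝ) hz0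

/-- The space `V` of centered configurations as a linear subspace of `M(m,k;ℝ)`, in which the
perturbations `x + t • y` of a configuration stay. -/
def centeredSubmodule (m k : ℕ) : Submodule ℝ (Matrix (Fin m) (Fin k) ℝ) where
  carrier := {x | centered x}
  zero_mem' i := by simp
  add_mem' hx hy i := by simp [Finset.sum_add_distrib, hx i, hy i]
  smul_mem' c x hx i := by simp [← Finset.mul_sum, hx i]

lemma exists_centered_le_rank {m k r : ℕ} (hrm : r ≤ m) (hrk : r < k) :
    ∃ y : Matrix (Fin m) (Fin k) ℝ, centered y ∧ r ≤ y.rank := by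
  let last : Fin k := ⟨r, hrk⟩
  let pivot (i : Fin m) : Fin k := ⟨min i r, by omega⟩
  let y : Matrix (Fin m) (Fin k) ℝ := of fun i ↦ Pi.single (pivot i) 1 - Pi.single last 1
  have hsub : y.submatrix (Fin.castLE hrm) (Fin.castLE hrk.le) = 1 := by
    ext i j
    have hj : r ≠ j := j.isLt.ne'
    simp [y, pivot, last, Pi.single_apply, Matrix.one_apply, Fin.ext_iff, i.isLt.le, hj, eq_comm]
  refine ⟨y, fun i ↦ by simp [y], ?_⟩
  calc r = (y.submatrix (Fin.castLE hrm) (Fin.castLE hrk.le)).rank := by simp [hsub]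
    _ ≤ y.rank := rank_submatrix_le _ _ _

open scoped Matrix.Norms.Frobenius in
lemma frobenius_norm_eq_sqrt_fip {m k : ℕ} (x : Matrix (Fin m) (Fin k) ℝ) :
    ‖x‖ = √(fip x x) := by
  simp [frobenius_norm_def, Real.sqrt_eq_rpow, fip, Matrix.trace, Matrix.mul_apply, pow_two]

open scoped Matrix.Norms.Frobenius in
lemma preSphere.dense_setOf_le_rank {m k r : ℕ} (hrm : r ≤ m) (hrk : r < k) :
    Dense {x : preSphere m k | r ≤ (x.1).rank} := by
  intro x
  obtain ⟨y, hy, hyr⟩ := exists_centered_le_rank hrm hrk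
  let C : Set (Matrix (Fin m) (Fin k) ℝ) := {z ∈ centeredSubmodule m k | y.rank ≤ z.rank}
  have hC : ∀ c : ℝ, 0 < c → ∀ z ∈ C, c • z ∈ C := fun c hc z hz ↦
    ⟨Submodule.smul_mem _ c hz.1, hz.2.trans_eq
      (rank_smul_of_mem_nonZeroDivisors z (mem_nonZeroDivisors_of_ne_zero hc.ne')).symm⟩
  have hxC : x.1 ∈ closure C :=
    mem_closure_setOf_mem_and_rank_le (V := centeredSubmodule m k) x.2.1 hy
  have hxS := mem_closure_inter_unitSphere hC hxC ((frobenius_norm_eq_sqrt_fip _).trans x.2.2)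
  refine closure_subtype.2 (closure_mono ?_ hxS)
  rintro z ⟨⟨hz, hzr⟩, hz1⟩
  have hfip : √(fip z z) = 1 :=
    (frobenius_norm_eq_sqrt_fip z).symm.trans (mem_sphere_zero_iff_norm.1 hz1)
  exact ⟨⟨z, hz, hfip⟩, hyr.trans hzr, rfl⟩

theorem stmt6_general (m k r : ℕ) (hrm : r ≤ m) (hrk : r < k) :
    IsOpen {x : preSphere m k | r ≤ (x.1).rank} ∧
      Dense {x : preSphere m k | r ≤ (x.1).rank} :=
  ⟨(isOpen_setOf_le_rank r).preimage continuous_subtype_val, preSphere.dense_setOf_le_rank hrm hrk⟩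

theorem stmt6 (m k : ℕ) (hm : 2 ≤ m) (hk : m ≤ k) :
    IsOpen {x : preSphere m k | m - 1 ≤ (x.1).rank} ∧
      Dense {x : preSphere m k | m - 1 ≤ (x.1).rank} :=
  stmt6_general m k (m - 1) (by omega) (by omega)

end
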